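/- Let Δ be a Cohen-Macaulay simplicial forest on vertex set V(Δ) and let R = K[x_v : v ∈ V(Δ)] be a polynomial ring over a field K. Then for each 1 ≤ k ≤ ν(Δ), every minimal prime ideal of R containing I(Δ)^{[k]} has height at least ν(Δ) − k + 1, and there exists a minimal prime of I(Δ)^{[k]} of height exactly ν(Δ) − k + 1; consequently ht(I(Δ)^{[k]}) = ν(Δ) − k + 1. -/

import Mathlib

/-!
The height formula comes from the König property `τ = ν`: some vertex cover `C` has as many vertices
as a maximum matching has facets. If a prime `p` contains `I ^ [k]`, fewer than `k` facets of a
maximum matching have their monomial outside `p`; the others contribute pairwise distinct variables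
to `p`, so `p` has height at least `ν - k + 1`. Conversely a monomial of `I ^ k` has degree at least
`k` in the variables of `C`, so a square-free one meets every `D ⊆ C` with `ν - k + 1` elements, and
`⟨x_v : v ∈ D⟩` is a prime of height `ν - k + 1` containing `I ^ [k]`.

A grafted complex has the König property: its leaves form a matching, and each leaf `F` has a vertex
lying on every facet that meets `F`.
-/

open MvPolynomial

/-- A simplicial complex on the vertex set `V`, presented by its set of facets
(the maximal faces).  Every facet is nonempty and no facet contains another. -/
structure SimplicialComplexOn (V : Type) [Fintype V] [DecidableEq V] : Type where
  facets : Finset (Finset V)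
  nonempty_facet : ∀ F ∈ facets, F.Nonempty
  antichain : ∀ F ∈ facets, ∀ G ∈ facets, F ⊆ G → F = G

variable {V : Type} [Fintype V] [DecidableEq V]

/-- `F` is a leaf of the collection of facets `S`: either `F` is the only facet, or
there is a facet `G ≠ F` (a joint) with `F ∩ H ⊆ F ∩ G` for every facet `H ≠ F`. -/
def IsLeafOf (S : Finset (Finset V)) (F : Finset V) : Prop :=
  F ∈ S ∧ ((∀ H ∈ S, H = F) ∨
    ∃ G ∈ S, G ≠ F ∧ ∀ H ∈ S, H ≠ F → F ∩ H ⊆ F ∩ G)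

/-- The forest property for a facet collection: every nonempty subcollection
(i.e. every nonempty subcomplex) has a leaf. -/
def HasLeafProp (S : Finset (Finset V)) : Prop :=
  ∀ T ⊆ S, T.Nonempty → ∃ F, IsLeafOf T F

/-- A good leaf: a facet which is a leaf of every subcomplex containing it. -/
def IsGoodLeafOf (S : Finset (Finset V)) (F : Finset V) : Prop :=
  F ∈ S ∧ ∀ T ⊆ S, F ∈ T → IsLeafOf T F

/-- A special leaf: a leaf `F` such that for all facets `H, H' ≠ F`,
`H ∩ H' ≠ ∅` iff `(H ∩ H') \ F ≠ ∅`. -/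
def IsSpecialLeafOf (S : Finset (Finset V)) (F : Finset V) : Prop :=
  IsLeafOf S F ∧ ∀ H ∈ S, ∀ H' ∈ S, H ≠ F → H' ≠ F →
    ((H ∩ H').Nonempty ↔ ((H ∩ H') \ F).Nonempty)

/-- A matching: a subcollection of the facets that is pairwise disjoint. -/
def IsMatchingOf (S : Finset (Finset V)) (M : Finset (Finset V)) : Prop :=
  M ⊆ S ∧ ∀ F ∈ M, ∀ G ∈ M, F ≠ G → F ∩ G = ∅

/-- The matching number: maximum size of a matching. -/
noncomputable def matchingNumberOf (S : Finset (Finset V)) : ℕ :=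
  sSup {n | ∃ M : Finset (Finset V), IsMatchingOf S M ∧ M.card = n}

/-- The facet collection `S` is grafted: it decomposes as `Fs ∪ Gs` where
(1) every vertex of a `G ∈ Gs` lies in some `F ∈ Fs`, (2) `Fs` is exactly the set
of leaves of `S`, (3) `Fs` and `Gs` are disjoint, (4) the members of `Fs` are
pairwise disjoint, and (5) for each `G ∈ Gs`, deleting the facet `G` leaves a
grafted collection. -/
inductive IsGrafted : Finset (Finset V) → Prop where
  | intro (S Fs Gs : Finset (Finset V))
      (hunion : S = Fs ∪ Gs)
      (hdisj : Disjoint Fs Gs)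
      (hcover : ∀ G ∈ Gs, ∀ v ∈ G, ∃ F ∈ Fs, v ∈ F)
      (hleaves : ∀ F, IsLeafOf S F ↔ F ∈ Fs)
      (hFdisj : ∀ F ∈ Fs, ∀ F' ∈ Fs, F ≠ F' → F ∩ F' = ∅)
      (hrec : ∀ G ∈ Gs, IsGrafted (S.erase G)) :
      IsGrafted S

/-- `S` is the (minimal presentation of the) grafting of the collection `Gs`
with the simplices `Fs`. -/
def IsGraftingDecomp (S Fs Gs : Finset (Finset V)) : Prop :=
  S = Fs ∪ Gs ∧ Disjoint Fs Gs ∧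
  (∀ G ∈ Gs, ∀ v ∈ G, ∃ F ∈ Fs, v ∈ F) ∧
  (∀ F, IsLeafOf S F ↔ F ∈ Fs) ∧
  (∀ F ∈ Fs, ∀ F' ∈ Fs, F ≠ F' → F ∩ F' = ∅) ∧
  (∀ G ∈ Gs, IsGrafted (S.erase G))

/-- A Cohen-Macaulay simplicial forest, combinatorially: a grafted simplicial forest. -/
def IsCMForestFacets (S : Finset (Finset V)) : Prop :=
  HasLeafProp S ∧ IsGrafted S

/-- The closed neighborhood `N[F] = {F} ∪ {G ∈ S : G ≠ F, G ∩ F ≠ ∅}`. -/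
def closedNbhd (S : Finset (Finset V)) (F : Finset V) : Finset (Finset V) :=
  insert F (S.filter fun G => G ≠ F ∧ (G ∩ F).Nonempty)

/-- The contraction of the facet collection `S` on `A`: the minimal members of
`{F \ A : F ∈ S}`. -/
def contraction (S : Finset (Finset V)) (A : Finset V) : Finset (Finset V) :=
  (S.image fun F => F \ A).filter fun F' => ∀ G ∈ S, G \ A ⊆ F' → G \ A = F'

variable (K : Type) [Field K]

/-- The square-free monomial `x_S = ∏_{v ∈ S} x_v`. -/
noncomputable def xMon (S : Finset V) : MvPolynomial V K := ∏ v ∈ S, X v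

/-- The facet ideal `I(Δ) = ⟨x_F : F a facet⟩`. -/
noncomputable def facetIdealOf (S : Finset (Finset V)) : Ideal (MvPolynomial V K) :=
  Ideal.span { p | ∃ F ∈ S, p = xMon K F }

/-- The `k`-th square-free power of an ideal: the ideal generated by all
square-free monomials lying in `I ^ k`. -/
noncomputable def sqfreePow (I : Ideal (MvPolynomial V K)) (k : ℕ) :
    Ideal (MvPolynomial V K) :=
  Ideal.span { p | (∃ S : Finset V, p = xMon K S) ∧ p ∈ I ^ k }

/-- The depth of `R/I` with respect to the homogeneous maximal ideal
`m = ⟨x_v : v ∈ V⟩`: the largest length of an `R/I`-regular sequence of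
elements of `m`. -/
noncomputable def gradedDepth (I : Ideal (MvPolynomial V K)) : ℕ :=
  sSup {n | ∃ rs : List (MvPolynomial V K), rs.length = n ∧
    (∀ r ∈ rs, r ∈ Ideal.span (Set.range (X : V → MvPolynomial V K))) ∧
    RingTheory.Sequence.IsRegular (MvPolynomial V K ⧸ I) rs}

/-- `R/I` is Cohen-Macaulay: its depth equals its Krull dimension. -/
def IsCMQuot (I : Ideal (MvPolynomial V K)) : Prop :=
  ((gradedDepth K I : ℕ∞) : WithBot ℕ∞) = ringKrullDim (MvPolynomial V K ⧸ I)

section Statements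

variable {V : Type} [Fintype V] [DecidableEq V] (K : Type) [Field K]

/-- Height of an ideal: the minimum height of a prime containing it. -/
noncomputable def idealHeight {R : Type*} [CommRing R] (I : Ideal R) : ℕ∞ :=
  ⨅ p ∈ {p : PrimeSpectrum R | I ≤ p.asIdeal}, Order.height p

section Matching

variable {α : Type}

/-- A vertex cover of the facet collection `S`: a set of vertices meeting every facet. -/
def IsVertexCoverOf (S : Finset (Finset α)) (C : Finset α) : Prop :=
  ∀ F ∈ S, ∃ v ∈ F, v ∈ C

/-- The König property `τ = ν`. Since every vertex cover has at least `ν` elements, it is encoded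
as the existence of one with exactly `ν` elements. -/
def HasKonigProperty [DecidableEq α] (S : Finset (Finset α)) : Prop :=
  ∃ C, IsVertexCoverOf S C ∧ C.card = matchingNumberOf S

variable [DecidableEq α] {S M N : Finset (Finset α)} {C : Finset α}

theorem IsMatchingOf.subset (hM : IsMatchingOf S M) (hNM : N ⊆ M) : IsMatchingOf S N :=
  ⟨hNM.trans hM.1, fun F hF G hG => hM.2 F (hNM hF) G (hNM hG)⟩

theorem IsMatchingOf.pairwiseDisjoint (hM : IsMatchingOf S M) :
    (M : Set (Finset α)).PairwiseDisjoint id :=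
  fun F hF G hG hFG => Finset.disjoint_iff_inter_eq_empty.2 (hM.2 F hF G hG hFG)

theorem IsMatchingOf.card_le_card (hM : IsMatchingOf S M) (hC : IsVertexCoverOf M C) :
    M.card ≤ C.card := by
  have hdisj : (M : Set (Finset α)).PairwiseDisjoint (· ∩ C) :=
    hM.pairwiseDisjoint.mono fun _ => Finset.inter_subset_left
  have hmeet : ∀ F ∈ M, (F ∩ C).Nonempty := fun F hF =>
    (hC F hF).imp fun _ => Finset.mem_inter.2
  exact (Finset.card_le_card_biUnion hdisj hmeet).trans
    (Finset.card_le_card (Finset.biUnion_subset.2 fun _ _ => Finset.inter_subset_right))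

theorem bddAbove_card_isMatchingOf (S : Finset (Finset α)) :
    BddAbove {n | ∃ M, IsMatchingOf S M ∧ M.card = n} := by
  refine ⟨S.card, ?_⟩
  rintro _ ⟨M, hM, rfl⟩
  exact Finset.card_le_card hM.1

theorem IsMatchingOf.card_le_matchingNumberOf (hM : IsMatchingOf S M) :
    M.card ≤ matchingNumberOf S :=
  le_csSup (bddAbove_card_isMatchingOf S) ⟨M, hM, rfl⟩

theorem exists_isMatchingOf_card_eq (S : Finset (Finset α)) :
    ∃ M, IsMatchingOf S M ∧ M.card = matchingNumberOf S :=
  have hne : {n | ∃ M, IsMatchingOf S M ∧ M.card = n}.Nonempty :=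
    ⟨0, ∅, by simp [IsMatchingOf], rfl⟩
  Nat.sSup_mem hne (bddAbove_card_isMatchingOf S)

theorem IsVertexCoverOf.matchingNumberOf_le_card (hC : IsVertexCoverOf S C) :
    matchingNumberOf S ≤ C.card := by
  obtain ⟨M, hM, hMcard⟩ := exists_isMatchingOf_card_eq S
  exact hMcard ▸ hM.card_le_card fun F hF => hC F (hM.1 hF)

end Matching

section Grafted

variable {α : Type}

/-- A free vertex of the facet `F` of `S`: a vertex of `F` lying on no other facet. -/
def IsFreeVertexOf (S : Finset (Finset α)) (F : Finset α) (v : α) : Prop :=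
  v ∈ F ∧ ∀ G ∈ S, v ∈ G → G = F

variable [DecidableEq α] {S : Finset (Finset α)} {F : Finset α}

theorem IsLeafOf.exists_isFreeVertexOf (hF : IsLeafOf S F) (hne : F.Nonempty)
    (hmax : ∀ G ∈ S, F ⊆ G → F = G) : ∃ v, IsFreeVertexOf S F v := by
  obtain ⟨-, hsingle | ⟨J, hJ, hJF, hjoint⟩⟩ := hF
  · obtain ⟨v, hv⟩ := hne
    exact ⟨v, hv, fun G hG _ => hsingle G hG⟩
  · obtain ⟨v, hvF, hvJ⟩ := Finset.not_subset.1 fun hFJ => hJF (hmax J hJ hFJ).symm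
    refine ⟨v, hvF, fun G hG hvG => ?_⟩
    by_contra hGF
    exact hvJ (Finset.mem_inter.1 (hjoint G hG hGF (Finset.mem_inter.2 ⟨hvF, hvG⟩))).2

-- Induction on the grafting, deleting a joint `J` of `F`. A vertex `v` that works for the remaining
-- facets lies on `J` as soon as one of them meets `F`; if none does, any vertex of `F ∩ J` works.
theorem IsGrafted.exists_forall_mem_of_isFreeVertexOf (hS : IsGrafted S) {u : α} (hF : F ∈ S)
    (hu : IsFreeVertexOf S F u) : ∃ v ∈ F, ∀ G ∈ S, (F ∩ G).Nonempty → v ∈ G := by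
  induction hS with
  | intro S Fs Gs hunion _ hcover hleaves hFdisj _ ih =>
    have hFs : Fs ⊆ S := hunion ▸ Finset.subset_union_left
    have hF_leaf : F ∈ Fs := by
      refine (Finset.mem_union.1 (hunion ▸ hF)).elim id fun hFG => ?_
      obtain ⟨F', hF', huF'⟩ := hcover F hFG u hu.1
      exact hu.2 F' (hFs hF') huF' ▸ hF'
    obtain ⟨-, hsingle | ⟨J, hJ, hJF, hjoint⟩⟩ := (hleaves F).2 hF_leaf
    · exact ⟨u, hu.1, fun G hG _ => hsingle G hG ▸ hu.1⟩
    obtain hFJ | ⟨w, hw⟩ := (F ∩ J).eq_empty_or_nonempty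
    · refine ⟨u, hu.1, fun G hG hFG => ?_⟩
      by_contra huG
      have hGF : G ≠ F := fun h => huG (h ▸ hu.1)
      exact hFG.ne_empty (Finset.subset_empty.1 (hFJ ▸ hjoint G hG hGF))
    have hJ_graft : J ∈ Gs := by
      refine (Finset.mem_union.1 (hunion ▸ hJ)).resolve_left fun hJFs => ?_
      exact Finset.ne_empty_of_mem hw (hFdisj F hF_leaf J hJFs hJF.symm)
    obtain ⟨v, hvF, hv⟩ := ih J hJ_graft (Finset.mem_erase.2 ⟨hJF.symm, hF⟩)
      ⟨hu.1, fun G hG => hu.2 G (Finset.mem_of_mem_erase hG)⟩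
    by_cases hvJ : v ∈ J
    · refine ⟨v, hvF, fun G hG hFG => ?_⟩
      obtain rfl | hGJ := eq_or_ne G J
      · exact hvJ
      · exact hv G (Finset.mem_erase.2 ⟨hGJ, hG⟩) hFG
    · refine ⟨w, (Finset.mem_inter.1 hw).1, fun G hG hFG => ?_⟩
      obtain rfl | hGJ := eq_or_ne G J
      · exact (Finset.mem_inter.1 hw).2
      obtain rfl | hGF := eq_or_ne G F
      · exact (Finset.mem_inter.1 hw).1
      have hvG : v ∈ G := hv G (Finset.mem_erase.2 ⟨hGJ, hG⟩) hFG
      have hvFJ := hjoint G hG hGF (Finset.mem_inter.2 ⟨hvF, hvG⟩)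
      exact absurd (Finset.mem_inter.1 hvFJ).2 hvJ

theorem IsGrafted.hasKonigProperty (hS : IsGrafted S) (hne : ∀ F ∈ S, F.Nonempty)
    (hac : ∀ F ∈ S, ∀ G ∈ S, F ⊆ G → F = G) : HasKonigProperty S := by
  have hleaf_vertex : ∀ F, IsLeafOf S F → ∃ v, ∀ G ∈ S, (F ∩ G).Nonempty → v ∈ G := by
    intro F hF
    obtain ⟨u, hu⟩ := hF.exists_isFreeVertexOf (hne F hF.1) (hac F hF.1)
    exact (hS.exists_forall_mem_of_isFreeVertexOf hF.1 hu).imp fun _ hv => hv.2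
  obtain ⟨_, Fs, Gs, rfl, -, hcover, hleaves, hFdisj, -⟩ := hS
  have hmatching : IsMatchingOf (Fs ∪ Gs) Fs := ⟨Finset.subset_union_left, hFdisj⟩
  choose f hf using fun F : Fs => hleaf_vertex F ((hleaves F).2 F.2)
  have hC : IsVertexCoverOf (Fs ∪ Gs) (Finset.univ.image f) := by
    intro G hG
    obtain ⟨F, hF, hFG⟩ : ∃ F ∈ Fs, (F ∩ G).Nonempty := by
      obtain ⟨v, hv⟩ := hne G hG
      obtain hG | hG := Finset.mem_union.1 hG
      · exact ⟨G, hG, v, Finset.mem_inter.2 ⟨hv, hv⟩⟩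
      · obtain ⟨F, hF, hvF⟩ := hcover G hG v hv
        exact ⟨F, hF, v, Finset.mem_inter.2 ⟨hvF, hv⟩⟩
    exact ⟨f ⟨F, hF⟩, hf ⟨F, hF⟩ G hG hFG, Finset.mem_image_of_mem f (Finset.mem_univ _)⟩
  refine ⟨_, hC, le_antisymm ?_ hC.matchingNumberOf_le_card⟩
  calc (Finset.univ.image f).card ≤ (Finset.univ : Finset Fs).card := Finset.card_image_le
    _ = Fs.card := by simp
    _ ≤ matchingNumberOf (Fs ∪ Gs) := hmatching.card_le_matchingNumberOf

end Grafted

section VariablePrimes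

variable {σ R : Type*} [CommRing R]

open Classical in
theorem ker_aeval_ite_eq_span_X_image (s : Set σ) :
    RingHom.ker (aeval fun i => if i ∈ s then 0 else X i :
      MvPolynomial σ R →ₐ[R] MvPolynomial σ R) = Ideal.span (X '' s) := by
  set kill : MvPolynomial σ R →ₐ[R] MvPolynomial σ R := aeval fun i => if i ∈ s then 0 else X i
  apply le_antisymm
  · have hmk : (Ideal.Quotient.mkₐ R (Ideal.span (X '' s))).comp kill =
        Ideal.Quotient.mkₐ R (Ideal.span (X '' s)) := by
      refine MvPolynomial.algHom_ext fun i => ?_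
      by_cases hi : i ∈ s
      · have hXi : (X i : MvPolynomial σ R) ∈ Ideal.span (X '' s) :=
          Ideal.subset_span (Set.mem_image_of_mem X hi)
        simp [kill, hi, Ideal.Quotient.eq_zero_iff_mem.2 hXi]
      · simp [kill, hi]
    intro p hp
    have hmkp := DFunLike.congr_fun hmk p
    rw [AlgHom.comp_apply, RingHom.mem_ker.1 hp, map_zero] at hmkp
    exact Ideal.Quotient.eq_zero_iff_mem.1 hmkp.symm
  · rw [Ideal.span_le]
    rintro _ ⟨i, hi, rfl⟩
    simp [kill, hi]

variable [IsDomain R]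

variable (R) in
/-- The prime ideal `⟨x_i : i ∈ s⟩` of the polynomial ring over a domain. -/
noncomputable def varPrime (s : Set σ) : PrimeSpectrum (MvPolynomial σ R) where
  asIdeal := Ideal.span (X '' s)
  isPrime := by
    classical
    exact ker_aeval_ite_eq_span_X_image (R := R) s ▸ RingHom.ker_isPrime _

theorem X_mem_varPrime_iff {s : Set σ} {i : σ} : X i ∈ (varPrime R s).asIdeal ↔ i ∈ s := by
  classical
  simp [varPrime, mem_ideal_span_X_image, support_X, Finsupp.single_apply]

theorem varPrime_le_iff {s : Set σ} {p : PrimeSpectrum (MvPolynomial σ R)} :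
    varPrime R s ≤ p ↔ ∀ i ∈ s, X i ∈ p.asIdeal := by
  rw [← PrimeSpectrum.asIdeal_le_asIdeal, varPrime, Ideal.span_le, Set.image_subset_iff]
  rfl

theorem varPrime_strictMono : StrictMono (varPrime R : Set σ → PrimeSpectrum (MvPolynomial σ R)) :=
  strictMono_of_le_iff_le fun s t => by simp only [varPrime_le_iff, X_mem_varPrime_iff]; rfl

theorem card_le_height_varPrime (s : Finset σ) :
    (s.card : ℕ∞) ≤ Order.height (varPrime R (s : Set σ)) := by
  induction s using Finset.cons_induction with
  | empty => simp
  | cons i s hi ih =>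
    rw [Finset.card_cons, Nat.cast_add, Nat.cast_one]
    refine (add_le_add_left ih 1).trans (Order.height_add_one_le (varPrime_strictMono ?_))
    exact Finset.coe_ssubset.2 (Finset.ssubset_cons hi)

theorem card_le_height_of_X_mem {s : Finset σ} {p : PrimeSpectrum (MvPolynomial σ R)}
    (hs : ∀ i ∈ s, X i ∈ p.asIdeal) : (s.card : ℕ∞) ≤ Order.height p :=
  (card_le_height_varPrime s).trans (Order.height_mono (varPrime_le_iff.2 hs))

theorem height_varPrime_le_card [IsNoetherianRing R] [Finite σ] (s : Finset σ) :
    Order.height (varPrime R (s : Set σ)) ≤ s.card := by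
  have hmin : (varPrime R (s : Set σ)).asIdeal ∈
      (Ideal.span (X '' (s : Set σ) : Set (MvPolynomial σ R))).minimalPrimes :=
    Ideal.minimalPrimes_eq_subsingleton_self (I := (varPrime R (s : Set σ)).asIdeal) ▸ rfl
  calc Order.height (varPrime R (s : Set σ))
      = (varPrime R (s : Set σ)).asIdeal.height := (PrimeSpectrum.height_eq_orderHeight _).symm
    _ ≤ (X '' (s : Set σ) : Set (MvPolynomial σ R)).ncard :=
        Ideal.height_le_card_of_mem_minimalPrimes_span (s.finite_toSet.image X) hmin
    _ ≤ s.card := by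
        exact_mod_cast (Set.ncard_image_le s.finite_toSet).trans_eq (Set.ncard_coe_finset s)

end VariablePrimes

section HeightBounds

variable {R : Type*} [CommRing R] {I : Ideal R} {n : ℕ∞} {P : PrimeSpectrum R}

theorem exists_mem_minimalPrimes_height_eq
    (hlow : ∀ p : PrimeSpectrum R, I ≤ p.asIdeal → n ≤ Order.height p)
    (hIP : I ≤ P.asIdeal) (hP : Order.height P ≤ n) :
    ∃ p, ∃ hp : p.IsPrime, p ∈ I.minimalPrimes ∧
      Order.height (⟨p, hp⟩ : PrimeSpectrum R) = n := by
  obtain ⟨p, hp, hpP⟩ := Ideal.exists_minimalPrimes_le hIP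
  have hle : (⟨p, hp.1.1⟩ : PrimeSpectrum R) ≤ P := hpP
  exact ⟨p, hp.1.1, hp, le_antisymm ((Order.height_mono hle).trans hP) (hlow _ hp.1.2)⟩

theorem idealHeight_eq_of_forall_le
    (hlow : ∀ p : PrimeSpectrum R, I ≤ p.asIdeal → n ≤ Order.height p)
    (hIP : I ≤ P.asIdeal) (hP : Order.height P ≤ n) : idealHeight I = n :=
  le_antisymm ((iInf₂_le P hIP).trans hP) (le_iInf₂ hlow)

end HeightBounds

section SquarefreePowers

variable {α : Type} {S M : Finset (Finset α)} {C D : Finset α} {k : ℕ}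

-- The `C`-degree is read off by sending the variables of `C` to `X : K[X]` and the others to `1`.
theorem le_card_inter_of_xMon_mem_pow [DecidableEq α] (hC : IsVertexCoverOf S C) {A : Finset α}
    (hA : xMon K A ∈ facetIdealOf K S ^ k) : k ≤ (A ∩ C).card := by
  let φ : MvPolynomial α K →ₐ[K] Polynomial K :=
    aeval fun v => if v ∈ C then Polynomial.X else 1
  have hφ (B : Finset α) : φ (xMon K B) = Polynomial.X ^ (B ∩ C).card := by
    simp only [φ, xMon, map_prod, aeval_X]
    rw [Finset.prod_ite, Finset.prod_const, Finset.prod_const_one, mul_one,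
      Finset.filter_mem_eq_inter]
  have hmap : (facetIdealOf K S).map φ ≤ Ideal.span {Polynomial.X} := by
    rw [facetIdealOf, Ideal.map_span, Ideal.span_le]
    rintro _ ⟨_, ⟨F, hF, rfl⟩, rfl⟩
    obtain ⟨v, hvF, hvC⟩ := hC F hF
    rw [hφ, SetLike.mem_coe, Ideal.mem_span_singleton]
    exact dvd_pow_self _ (Finset.card_ne_zero_of_mem (Finset.mem_inter.2 ⟨hvF, hvC⟩))
  have hφA : φ (xMon K A) ∈ Ideal.span {(Polynomial.X : Polynomial K)} ^ k :=
    Ideal.pow_right_mono hmap k (Ideal.map_pow φ (facetIdealOf K S) k ▸ Ideal.mem_map_of_mem φ hA)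
  rw [hφ, Ideal.span_singleton_pow, Ideal.mem_span_singleton] at hφA
  exact (pow_dvd_pow_iff Polynomial.X_ne_zero Polynomial.not_isUnit_X).1 hφA

theorem sqfreePow_facetIdealOf_le_varPrime (hC : IsVertexCoverOf S C) (hDC : D ⊆ C)
    (hcard : C.card < D.card + k) :
    sqfreePow K (facetIdealOf K S) k ≤ (varPrime K (D : Set α)).asIdeal := by
  classical
  refine Ideal.span_le.2 ?_
  rintro _ ⟨⟨A, rfl⟩, hA⟩
  have hAC := le_card_inter_of_xMon_mem_pow K hC hA
  obtain ⟨v, hv⟩ : (D ∩ (A ∩ C)).Nonempty :=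
    Finset.inter_nonempty_of_card_lt_card_add_card hDC Finset.inter_subset_right (by omega)
  obtain ⟨hvD, hvA, -⟩ : v ∈ D ∧ v ∈ A ∧ v ∈ C := by simpa only [Finset.mem_inter] using hv
  exact Ideal.mem_of_dvd _ (Finset.dvd_prod_of_mem _ hvA) (X_mem_varPrime_iff.2 hvD)

variable [DecidableEq α]

theorem IsMatchingOf.prod_xMon_mem_sqfreePow (hM : IsMatchingOf S M) :
    ∏ F ∈ M, xMon K F ∈ sqfreePow K (facetIdealOf K S) M.card := by
  refine Ideal.subset_span ⟨⟨M.biUnion id, ?_⟩, ?_⟩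
  · exact (Finset.prod_biUnion hM.pairwiseDisjoint).symm
  · rw [← Finset.prod_const]
    exact Ideal.prod_mem_prod fun F hF => Ideal.subset_span ⟨F, hM.1 hF, rfl⟩

variable {K} {p : Ideal (MvPolynomial α K)} [p.IsPrime]

theorem IsMatchingOf.card_lt_of_forall_xMon_notMem (hM : IsMatchingOf S M)
    (hp : sqfreePow K (facetIdealOf K S) k ≤ p) (hMp : ∀ F ∈ M, xMon K F ∉ p) : M.card < k := by
  by_contra! hk
  obtain ⟨N, hNM, rfl⟩ := Finset.exists_subset_card_eq hk
  obtain ⟨F, hF, hFp⟩ := Ideal.IsPrime.prod_mem_iff.1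
    (hp ((hM.subset hNM).prod_xMon_mem_sqfreePow K))
  exact hMp F (hNM hF) hFp

theorem exists_X_mem_matchingNumberOf_lt_card_add (hp : sqfreePow K (facetIdealOf K S) k ≤ p) :
    ∃ W : Finset α, (∀ v ∈ W, X v ∈ p) ∧ matchingNumberOf S < W.card + k := by
  classical
  obtain ⟨M, hM, hMcard⟩ := exists_isMatchingOf_card_eq S
  let W : Finset α := {v ∈ M.biUnion id | X v ∈ p}
  let Nin : Finset (Finset α) := {F ∈ M | xMon K F ∈ p}
  let Nout : Finset (Finset α) := {F ∈ M | xMon K F ∉ p}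
  have hout : Nout.card < k :=
    (hM.subset (Finset.filter_subset _ M)).card_lt_of_forall_xMon_notMem hp
      fun F hF => (Finset.mem_filter.1 hF).2
  have hcover : IsVertexCoverOf Nin W := by
    intro F hF
    obtain ⟨hFM, hFp⟩ := Finset.mem_filter.1 hF
    obtain ⟨v, hv, hvp⟩ := Ideal.IsPrime.prod_mem_iff.1 hFp
    exact ⟨v, hv, Finset.mem_filter.2 ⟨Finset.mem_biUnion.2 ⟨F, hFM, hv⟩, hvp⟩⟩
  have hin : Nin.card ≤ W.card := (hM.subset (Finset.filter_subset _ M)).card_le_card hcover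
  have hsplit : Nin.card + Nout.card = M.card := Finset.card_filter_add_card_filter_not _
  exact ⟨W, fun v hv => (Finset.mem_filter.1 hv).2, by omega⟩

end SquarefreePowers

theorem stmt4_general {α : Type} [Finite α] [DecidableEq α] {S : Finset (Finset α)}
    (hS : HasKonigProperty S) :
    ∀ k : ℕ, 1 ≤ k → k ≤ matchingNumberOf S →
      (∀ p ∈ (sqfreePow K (facetIdealOf K S) k).minimalPrimes,
        ∀ hp : p.IsPrime,
          ((matchingNumberOf S - k + 1 : ℕ) : ℕ∞) ≤
            Order.height (⟨p, hp⟩ : PrimeSpectrum (MvPolynomial α K))) ∧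
      (∃ p, ∃ hp : p.IsPrime, p ∈ (sqfreePow K (facetIdealOf K S) k).minimalPrimes ∧
          Order.height (⟨p, hp⟩ : PrimeSpectrum (MvPolynomial α K)) =
            ((matchingNumberOf S - k + 1 : ℕ) : ℕ∞)) ∧
      idealHeight (sqfreePow K (facetIdealOf K S) k) =
        ((matchingNumberOf S - k + 1 : ℕ) : ℕ∞) := by
  intro k hk1 hk
  have hlow (p : PrimeSpectrum (MvPolynomial α K))
      (hp : sqfreePow K (facetIdealOf K S) k ≤ p.asIdeal) :
      ((matchingNumberOf S - k + 1 : ℕ) : ℕ∞) ≤ Order.height p := by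
    obtain ⟨W, hWp, hW⟩ := exists_X_mem_matchingNumberOf_lt_card_add hp
    have hcard : matchingNumberOf S - k + 1 ≤ W.card := by omega
    exact (Nat.cast_le.2 hcard).trans (card_le_height_of_X_mem hWp)
  obtain ⟨C, hC, hCcard⟩ := hS
  obtain ⟨D, hDC, hD⟩ := Finset.exists_subset_card_eq
    (show matchingNumberOf S - k + 1 ≤ C.card by omega)
  have hID := sqfreePow_facetIdealOf_le_varPrime K (k := k) hC hDC (by omega)
  have hDheight := hD ▸ height_varPrime_le_card (R := K) D
  exact ⟨fun p hp hpp => hlow ⟨p, hpp⟩ hp.1.2,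
    exists_mem_minimalPrimes_height_eq hlow hID hDheight,
    idealHeight_eq_of_forall_le hlow hID hDheight⟩

theorem stmt4 (Δ : SimplicialComplexOn V)
    (hcov : ∀ v : V, ∃ F ∈ Δ.facets, v ∈ F)
    (hCM : IsCMForestFacets Δ.facets) :
    ∀ k : ℕ, 1 ≤ k → k ≤ matchingNumberOf Δ.facets →
      (∀ p ∈ (sqfreePow K (facetIdealOf K Δ.facets) k).minimalPrimes,
        ∀ hp : p.IsPrime,
          ((matchingNumberOf Δ.facets - k + 1 : ℕ) : ℕ∞) ≤
            Order.height (⟨p, hp⟩ : PrimeSpectrum (MvPolynomial V K))) ∧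
      (∃ p, ∃ hp : p.IsPrime, p ∈ (sqfreePow K (facetIdealOf K Δ.facets) k).minimalPrimes ∧
          Order.height (⟨p, hp⟩ : PrimeSpectrum (MvPolynomial V K)) =
            ((matchingNumberOf Δ.facets - k + 1 : ℕ) : ℕ∞)) ∧
      idealHeight (sqfreePow K (facetIdealOf K Δ.facets) k) =
        ((matchingNumberOf Δ.facets - k + 1 : ℕ) : ℕ∞) :=
  stmt4_general K (hCM.2.hasKonigProperty Δ.nonempty_facet Δ.antichain)

end Statements
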